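/- Let d and g be positive integers. Suppose a : {1,...,p} → ℤ>0 and b : {1,...,q} → ℤ>0 are partitions of d (i.e. a₁ + ⋯ + a_p = d and b₁ + ⋯ + b_q = d), and m₁, m₂ are positive integers with m₁ + m₂ = p + q − 2 + 2g, m₁ + 1 ≤ d, and m₂ + 1 ≤ d. Then there exist permutations τ₁, τ₂, σ₁, σ₂ in the symmetric group S_d such that: (1) τ₁ τ₂ σ₁ σ₂ = id; (2) the cycle type of τ₁ (as a partition of d, counting each fixed point as a part equal to 1) is (a₁, …, a_p), the cycle type of τ₂ is (b₁, …, b_q), σ₁ is a single cycle of length m₁ + 1, and σ₂ is a single cycle of length m₂ + 1; (3) the subgroup of S_d generated by τ₁, τ₂, σ₁, σ₂ acts transitively on {1, 2, …, d}. -/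

import Mathlib

/-- The cycle type of a permutation of `Fin n`, as a partition of `n`:
the lengths of the cycles in the disjoint cycle decomposition, counting
each fixed point as a part equal to `1`. -/
def fullCycleType {n : ℕ} (σ : Equiv.Perm (Fin n)) : Multiset ℕ :=
  σ.cycleType + Multiset.replicate (n - σ.support.card) 1

/-!
Suppose `t₁ t₂` is an `(m₁ + 1)`-cycle and `s₁ s₂` an `(m₂ + 1)`-cycle, where `t₁`, `s₁` have cycle
types `a`, `b` and `t₂`, `s₂` have a common cycle type `r`. After a conjugation `s₂ = t₂⁻¹`, and
then `t₁ (t₂ s₁ t₂⁻¹) = (t₁ t₂) (s₁ s₂)` writes a product of permutations of types `a` and `b` as a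
product of two cycles. If `m₁` and `m₂` are at least the numbers of parts of `a` and `b`, then
`r = (d)` or `r = (1, d - 1)` works, depending on the parity of `m₁` minus the number of parts of
`a`; if `m₁` is smaller, then `r` is obtained from `a` by merging `m₁ + 1` of its parts into one.

That leaves the construction of transitive factorizations of an `(m + 1)`-cycle into permutations
of types `a` and `b`. By induction on the sum of `a`, they arise by gluing on an `x`-cycle, which
adds a part `x` to `a` and adds `x` to a part of `b`, and by attaching a handle, which adds `2` to a
part of `a` and to a part of `b`. What remains are types `a = b` with all parts equal, realized by a
commutator, and types `a = (2, …, 2)`, reduced to shorter ones by splitting a part `i + j` of `b`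
into `i + 1` and `j + 1`.
-/

open Equiv

section

variable {α : Type*} [DecidableEq α]

theorem swap_mul_comm_of_fixed {f : Perm α} {n n' : α} (hn : f n = n) (hn' : f n' = n') :
    swap n n' * f = f * swap n n' := by
  rw [mul_swap_eq_swap_mul, hn, hn']

theorem swap_mul_swap_mul_swap_mul_swap {u v n₁ n₂ : α} (huv : u ≠ v)
    (hun₂ : u ≠ n₂) (hvn₁ : v ≠ n₁) (hvn₂ : v ≠ n₂) (hn : n₁ ≠ n₂) :
    swap n₁ n₂ * swap u n₁ * swap v n₂ * swap u v = swap u n₁ * swap v n₂ := by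
  ext w
  simp only [Perm.mul_apply, swap_apply_def]
  grind

theorem mul_swap_of_fixed {f : Perm α} {n : α} (u : α) (hn : f n = n) :
    f * swap u n = swap (f u) n * f := by
  rw [mul_swap_eq_swap_mul, hn]

-- These three identities show that the pairs built in `CycleFactorization.glue`, `split_edge` and
-- `add_handle` have a single cycle as their product: multiplying a cycle on the left by `swap u n`
-- inserts a new point `n`, and `swap u v` joins the two cycles through `u` and `v`.
theorem glue_mul {t t' c c' f f' : Perm α} {u v : α} (hu : t' u = u) (hv : t (t' v) = t' v)
    (hcomm : Commute (c * f) t') (hcomm' : Commute c' f) :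
    t * t' * (swap u v * c * c' * (f * f')) =
      swap (t u) (t' v) * (t * (c * f)) * (t' * (c' * f')) := by
  have hswap : t * t' * swap u v = swap (t u) (t' v) * (t * t') := by
    rw [mul_swap_eq_swap_mul, Perm.mul_apply, Perm.mul_apply, hu, hv]
  calc t * t' * (swap u v * c * c' * (f * f'))
    _ = t * t' * swap u v * c * (c' * f) * f' := by simp only [mul_assoc]
    _ = swap (t u) (t' v) * t * (t' * (c * f)) * (c' * f') := by
      rw [hswap, hcomm'.eq]
      simp only [mul_assoc]
    _ = swap (t u) (t' v) * (t * (c * f)) * (t' * (c' * f')) := by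
      rw [← hcomm.eq]
      simp only [mul_assoc]

theorem split_edge_mul {t c₁ c₂ f : Perm α} {u v n₁ n₂ : α} (huv : u ≠ v) (hun₂ : u ≠ n₂)
    (hvn₁ : v ≠ n₁) (hvn₂ : v ≠ n₂) (hn : n₁ ≠ n₂) (ht₁ : t n₁ = n₁) (ht₂ : t n₂ = n₂)
    (hc₁ : c₁ v = v) (hc₂ : c₁ n₂ = n₂) :
    swap n₁ n₂ * t * (swap u n₁ * c₁ * (swap v n₂ * c₂ * f)) =
      swap (t u) n₁ * (swap (t v) n₂ * (t * (swap u v * c₁ * c₂ * f))) :=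
  calc swap n₁ n₂ * t * (swap u n₁ * c₁ * (swap v n₂ * c₂ * f))
    _ = t * (swap n₁ n₂ * swap u n₁ * swap v n₂ * swap u v) * (swap u v * c₁ * c₂ * f) := by
      simp only [swap_mul_comm_of_fixed ht₁ ht₂, mul_assoc, swap_mul_self_mul]
      rw [← mul_assoc c₁, ← swap_mul_comm_of_fixed hc₁ hc₂, mul_assoc]
    _ = t * swap u n₁ * (swap v n₂ * (swap u v * c₁ * c₂ * f)) := by
      rw [swap_mul_swap_mul_swap_mul_swap huv hun₂ hvn₁ hvn₂ hn]
      simp only [mul_assoc]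
    _ = swap (t u) n₁ * (t * swap v n₂) * (swap u v * c₁ * c₂ * f) := by
      rw [mul_swap_of_fixed u ht₁]
      simp only [mul_assoc]
    _ = swap (t u) n₁ * (swap (t v) n₂ * (t * (swap u v * c₁ * c₂ * f))) := by
      rw [mul_swap_of_fixed v ht₂]
      simp only [mul_assoc]

theorem add_handle_mul {c₁ f₁ c₂ f₂ : Perm α} {u n₁ n₂ : α} (v : α) (hun₁ : u ≠ n₁)
    (hun₂ : u ≠ n₂) (hf₁ : f₁ n₁ = n₁) (hf₂ : f₁ n₂ = n₂) (hc₁ : c₂ n₁ = n₁) (hc₂ : c₂ n₂ = n₂)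
    (hcn₂ : c₁ n₂ = n₂) :
    swap v n₁ * c₁ * swap n₁ n₂ * f₁ * (swap u n₁ * c₂ * swap n₁ n₂ * f₂) =
      swap v n₁ * (swap ((c₁ * f₁) u) n₂ * (c₁ * f₁ * (c₂ * f₂))) :=
  calc swap v n₁ * c₁ * swap n₁ n₂ * f₁ * (swap u n₁ * c₂ * swap n₁ n₂ * f₂)
    _ = swap v n₁ * c₁ * (swap n₁ n₂ * f₁) * swap u n₁ * (c₂ * swap n₁ n₂) * f₂ := by
      simp only [mul_assoc]
    _ = swap v n₁ * (c₁ * f₁) * (swap n₁ n₂ * swap u n₁ * swap n₁ n₂) * (c₂ * f₂) := by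
      rw [swap_mul_comm_of_fixed hf₁ hf₂, ← swap_mul_comm_of_fixed hc₁ hc₂]
      simp only [mul_assoc]
    _ = swap v n₁ * (c₁ * f₁ * swap u n₂) * (c₂ * f₂) := by
      rw [swap_mul_swap_mul_swap hun₁ hun₂, swap_comm n₂ u]
      simp only [mul_assoc]
    _ = swap v n₁ * (swap ((c₁ * f₁) u) n₂ * (c₁ * f₁ * (c₂ * f₂))) := by
      rw [mul_swap_of_fixed u (by rw [Perm.mul_apply, hf₂, hcn₂])]
      simp only [mul_assoc]

theorem exists_eq_insert_insert {U : Finset α} {k : ℕ} (hU : U.card = k + 2) :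
    ∃ n₁ n₂ V, n₁ ∉ V ∧ n₂ ∉ V ∧ n₁ ≠ n₂ ∧ V.card = k ∧ insert n₁ (insert n₂ V) = U := by
  obtain ⟨n₁, W, hn₁, rfl, hW⟩ := Finset.card_eq_succ.1 hU
  obtain ⟨n₂, V, hn₂, rfl, hV⟩ := Finset.card_eq_succ.1 hW
  rw [Finset.mem_insert, not_or] at hn₁
  exact ⟨n₁, n₂, V, hn₁.2, hn₂, hn₁.1, hV, rfl⟩

variable [Fintype α]

theorem commute_of_support_subset {f g : Perm α} {s t : Finset α} (hf : f.support ⊆ s)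
    (hg : g.support ⊆ t) (hst : Disjoint s t) : Commute f g :=
  (Perm.disjoint_iff_disjoint_support.2 (hst.mono hf hg)).commute

/-! ### Cycles and cycle types -/

/-- `c` permutes the points of `s` in a single cycle and fixes all other points. Unlike for
`Equiv.Perm.IsCycle`, a fixed point `x` counts as a cycle, carried by `s = {x}`. -/
def IsSingleCycle (c : Perm α) (s : Finset α) : Prop :=
  c.IsCycleOn s ∧ c.support ⊆ s

namespace IsSingleCycle

variable {c d : Perm α} {s t U : Finset α} {p u v x y n n' : α}

theorem apply_of_notMem (h : IsSingleCycle c s) (hx : x ∉ s) : c x = x :=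
  Perm.notMem_support.1 fun hs => hx (h.2 hs)

theorem apply_mem_iff (h : IsSingleCycle c s) : c x ∈ s ↔ x ∈ s :=
  h.1.apply_mem_iff

theorem of_sameCycle (hfix : ∀ x ∉ s, c x = x) (hp : ∀ x ∈ s, c.SameCycle p x) :
    IsSingleCycle c s := by
  have hmem : ∀ x, c x ∈ s ↔ x ∈ s := fun x => by
    by_cases hx : x ∈ s
    · refine iff_of_true (by_contra fun hcx => ?_) hx
      exact hcx (by rwa [c.injective (hfix _ hcx)])
    · rw [hfix x hx]
  refine ⟨⟨⟨fun x hx => (hmem x).2 hx, c.injective.injOn, fun y hy => ?_⟩,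
    fun x hx y hy => (hp x hx).symm.trans (hp y hy)⟩, fun x hx => ?_⟩
  · exact ⟨c⁻¹ y, (hmem _).1 (by simpa using hy), by simp⟩
  · exact by_contra fun hxs => Perm.mem_support.1 hx (hfix x hxs)

theorem induction_on (h : IsSingleCycle c s) (hp : p ∈ s) {P : α → Prop} (base : P p)
    (step : ∀ x ∈ s, P x → P (c x)) (hx : x ∈ s) : P x := by
  obtain ⟨k, -, rfl⟩ := h.1.exists_pow_eq hp hx
  clear hx
  suffices h' : (c ^ k) p ∈ s ∧ P ((c ^ k) p) from h'.2
  induction k with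
  | zero => exact ⟨hp, base⟩
  | succ k ih =>
    rw [pow_succ', Perm.mul_apply]
    exact ⟨h.apply_mem_iff.2 ih.1, step _ ih.1 ih.2⟩

theorem inv (h : IsSingleCycle c s) : IsSingleCycle c⁻¹ s :=
  ⟨h.1.inv, (Perm.support_inv c).trans_subset h.2⟩

theorem conj (h : IsSingleCycle c s) (k : Perm α) : IsSingleCycle (k * c * k⁻¹) (s.image k) := by
  refine ⟨by simpa using h.1.conj, ?_⟩
  rw [Perm.support_conj, Finset.map_eq_image]
  exact Finset.image_subset_image h.2

theorem singleton (x : α) : IsSingleCycle 1 {x} := by simp [IsSingleCycle]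

theorem swap (hxy : x ≠ y) : IsSingleCycle (swap x y) {x, y} :=
  ⟨by simpa using Perm.isCycleOn_swap hxy, (Perm.support_swap hxy).subset⟩

theorem mul (hc : IsSingleCycle c s) (hd : IsSingleCycle d t) (hst : s ∩ t = {p}) :
    IsSingleCycle (c * d) (s ∪ t) := by
  have hps : p ∈ s := (Finset.mem_inter.1 (hst ▸ Finset.mem_singleton_self p)).1
  have hpt : p ∈ t := (Finset.mem_inter.1 (hst ▸ Finset.mem_singleton_self p)).2
  have hmeet : ∀ x, x ∈ s → x ∈ t → x = p := fun x hs ht =>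
    Finset.mem_singleton.1 (hst ▸ Finset.mem_inter.2 ⟨hs, ht⟩)
  have along_t : ∀ y ∈ t, (c * d).SameCycle p y := fun y hy =>
    hd.induction_on hpt .rfl (fun y hy ih => by
      by_cases hdy : d y = p
      · rw [hdy]
      · have hds : d y ∉ s := fun hs => hdy (hmeet _ hs (hd.apply_mem_iff.2 hy))
        rw [← hc.apply_of_notMem hds, ← Perm.mul_apply]
        exact Perm.sameCycle_apply_right.2 ih) hy
  have along_s : ∀ x ∈ s, (c * d).SameCycle p x := fun x hx =>
    hc.induction_on hps .rfl (fun x hx ih => by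
      by_cases hxp : x = p
      · have hcp : c p = (c * d) (d⁻¹ p) := by simp
        rw [hxp, hcp]
        exact Perm.sameCycle_apply_right.2 (along_t _ (hd.inv.apply_mem_iff.2 hpt))
      · have hxt : x ∉ t := fun ht => hxp (hmeet _ hx ht)
        rw [← hd.apply_of_notMem hxt, ← Perm.mul_apply]
        exact Perm.sameCycle_apply_right.2 ih) hx
  refine of_sameCycle (p := p) (fun x hx => ?_) fun x hx => ?_
  · rw [Finset.notMem_union] at hx
    rw [Perm.mul_apply, hd.apply_of_notMem hx.2, hc.apply_of_notMem hx.1]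
  · exact (Finset.mem_union.1 hx).elim (along_s x) (along_t x)

theorem swap_mul (hc : IsSingleCycle c s) (hu : u ∈ s) (hn : n ∉ s) :
    IsSingleCycle (Equiv.swap u n * c) (insert n s) := by
  have hun : u ≠ n := fun h => hn (h ▸ hu)
  have h := (swap hun).mul (p := u) hc (by grind)
  rwa [show ({u, n} ∪ s : Finset α) = insert n s by grind] at h

theorem swap_mul_mul (hc : IsSingleCycle c s) (hd : IsSingleCycle d t) (hst : Disjoint s t)
    (hu : u ∈ s) (hv : v ∈ t) : IsSingleCycle (Equiv.swap u v * c * d) (s ∪ t) := by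
  have hvs : v ∉ s := Finset.disjoint_right.1 hst hv
  have h := (hc.swap_mul hu hvs).mul (p := v) hd (by
    rw [Finset.insert_inter_of_mem hv, Finset.disjoint_iff_inter_eq_empty.1 hst]; rfl)
  rwa [show insert v s ∪ t = s ∪ t by grind] at h

theorem isCycle (h : IsSingleCycle c s) (hs : 1 < s.card) : c.IsCycle :=
  Perm.isCycle_iff_exists_isCycleOn.2
    ⟨s, Finset.one_lt_card_iff_nontrivial.1 hs, h.1, fun _ hx => h.2 (Perm.mem_support.2 hx)⟩

theorem support_eq (h : IsSingleCycle c s) (hs : 1 < s.card) : c.support = s :=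
  h.2.antisymm fun _ hx =>
    Perm.mem_support.2 (h.1.apply_ne (Finset.one_lt_card_iff_nontrivial.1 hs) hx)

theorem swap_mul_mul_swap (hc : IsSingleCycle c s) (hu : u ∈ s) (hn : n ∉ s) (hn' : n' ∉ s)
    (hnn' : n ≠ n') :
    IsSingleCycle (Equiv.swap u n * c * Equiv.swap n n') (insert n (insert n' s)) := by
  have h := (hc.swap_mul hu hn).mul (p := n) (swap hnn') (by grind)
  rwa [show insert n s ∪ {n, n'} = insert n (insert n' s) by grind] at h

theorem exists_eq_swap_mul_mul {i j : ℕ} (hc : IsSingleCycle c s) (hs : s.card = i + j)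
    (hi : 0 < i) (hj : 0 < j) :
    ∃ u v c₁ s₁ c₂ s₂, c = Equiv.swap u v * c₁ * c₂ ∧ s = s₁ ∪ s₂ ∧ Disjoint s₁ s₂ ∧
      u ∈ s₁ ∧ v ∈ s₂ ∧ s₁.card = i ∧ s₂.card = j ∧ IsSingleCycle c₁ s₁ ∧ IsSingleCycle c₂ s₂ := by
  have hs1 : 1 < s.card := by omega
  obtain ⟨s₁, hs₁, rfl⟩ := Finset.exists_subset_card_eq (show i ≤ s.card by omega)
  have hs₂ : (s \ s₁).card = j := by rw [Finset.card_sdiff_of_subset hs₁]; omega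
  have hdisj : Disjoint s₁ (s \ s₁) := Finset.disjoint_sdiff
  obtain ⟨c₁, hc₁ : IsSingleCycle c₁ s₁⟩ := s₁.exists_cycleOn
  obtain ⟨c₂, hc₂ : IsSingleCycle c₂ (s \ s₁)⟩ := (s \ s₁).exists_cycleOn
  obtain ⟨u, hu⟩ := Finset.card_pos.1 hi
  obtain ⟨v, hv⟩ := Finset.card_pos.1 (hs₂ ▸ hj)
  have he : IsSingleCycle (Equiv.swap u v * c₁ * c₂) s := by
    simpa [Finset.union_sdiff_of_subset hs₁] using swap_mul_mul hc₁ hc₂ hdisj hu hv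
  obtain ⟨k, rfl⟩ := isConj_iff.1 ((he.isCycle hs1).isConj (hc.isCycle hs1)
    (by rw [he.support_eq hs1, hc.support_eq hs1]))
  have hks : s.image k = s := by rw [← (he.conj k).support_eq
    (by rwa [Finset.card_image_of_injective _ k.injective]), hc.support_eq hs1]
  refine ⟨k u, k v, k * c₁ * k⁻¹, s₁.image k, k * c₂ * k⁻¹, (s \ s₁).image k, ?_, ?_,
    (Finset.disjoint_image k.injective).2 hdisj, Finset.mem_image_of_mem k hu,
    Finset.mem_image_of_mem k hv, Finset.card_image_of_injective _ k.injective,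
    (Finset.card_image_of_injective _ k.injective).trans hs₂, hc₁.conj k, hc₂.conj k⟩
  · rw [Equiv.swap_apply_apply]
    group
  · rw [← Finset.image_union, Finset.union_sdiff_of_subset hs₁, hks]

theorem image_eq (hc : IsSingleCycle c s) (hs : s ⊆ U) : U.image c = U := by
  have h := Finset.map_perm (σ := c) (s := U) fun x hx =>
    hs (hc.2 (Perm.mem_support.2 hx))
  rwa [Finset.map_eq_image] at h

theorem apply_apply_ne (hc : IsSingleCycle c s) (hu : u ∈ s) (hs : 2 < s.card) :
    c (c u) ≠ u := fun hcu => by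
  have hsub : s ⊆ {u, c u} := fun x hx =>
    hc.induction_on hu (P := (· ∈ ({u, c u} : Finset α))) (by simp) (by grind) hx
  have := (Finset.card_le_card hsub).trans Finset.card_le_two
  omega

end IsSingleCycle

/-- `HasCycles M f U a`: the permutation `f` is a product of disjoint cycles which partition `U`,
fixed points in `U` counting as cycles, whose lengths form the multiset `a`, and each of which
passes through a marked point, that is, an element of `M`. Outside of `U`, `f` is the identity. -/
inductive HasCycles (M : Finset α) : Perm α → Finset α → Multiset ℕ → Prop
  | one : HasCycles M 1 ∅ 0
  | mul {c f : Perm α} {s U : Finset α} {a : Multiset ℕ} (hc : IsSingleCycle c s)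
      (hM : ∃ u ∈ s, u ∈ M) (hsU : Disjoint s U) (hf : HasCycles M f U a) :
      HasCycles M (c * f) (s ∪ U) (s.card ::ₘ a)

namespace HasCycles

variable {M N U V W Z s : Finset α} {c f g : Perm α} {a b : Multiset ℕ} {x : ℕ}

theorem support_subset (hf : HasCycles M f U a) : f.support ⊆ U := by
  induction hf with
  | one => simp
  | mul hc _ _ _ ih =>
    exact (Perm.support_mul_le _ _).trans (Finset.union_subset_union hc.2 ih)

theorem apply_of_notMem (hf : HasCycles M f U a) {y : α} (hy : y ∉ U) : f y = y :=
  Perm.notMem_support.1 fun h => hy (hf.support_subset h)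

theorem apply_mem_iff (hf : HasCycles M f U a) {y : α} : f y ∈ U ↔ y ∈ U := by
  by_cases hy : f y = y
  · rw [hy]
  · exact iff_of_true (hf.support_subset (Perm.apply_mem_support.2 (Perm.mem_support.2 hy)))
      (hf.support_subset (Perm.mem_support.2 hy))

theorem mono (hf : HasCycles M f U a) (hMN : M ⊆ N) : HasCycles N f U a := by
  induction hf with
  | one => exact one
  | mul hc hM hsU _ ih => exact mul hc (hM.imp fun _ h => ⟨h.1, hMN h.2⟩) hsU ih

theorem commute (hf : HasCycles M f U a) (hc : IsSingleCycle c s) (hsU : Disjoint s U) :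
    Commute c f :=
  commute_of_support_subset hc.2 hf.support_subset hsU

theorem inv (hf : HasCycles M f U a) : HasCycles M f⁻¹ U a := by
  induction hf with
  | one => simpa using one
  | mul hc hM hsU hf ih =>
    rw [(hf.commute hc hsU).eq, mul_inv_rev]
    exact mul hc.inv hM hsU ih

theorem conj (hf : HasCycles M f U a) (k : Perm α) :
    HasCycles (M.image k) (k * f * k⁻¹) (U.image k) a := by
  induction hf with
  | one => simpa using one
  | @mul c f s U a hc hM hsU hf ih =>
    rw [show k * (c * f) * k⁻¹ = k * c * k⁻¹ * (k * f * k⁻¹) by group, Finset.image_union,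
      ← Finset.card_image_of_injective s k.injective]
    obtain ⟨u, hus, huM⟩ := hM
    exact mul (hc.conj k) ⟨k u, Finset.mem_image_of_mem k hus, Finset.mem_image_of_mem k huM⟩
      ((Finset.disjoint_image k.injective).2 hsU) ih

theorem mul_of_disjoint (hf : HasCycles M f U a) (hg : HasCycles M g V b) (hUV : Disjoint U V) :
    HasCycles M (f * g) (U ∪ V) (a + b) := by
  induction hf with
  | one => simpa using hg
  | mul hc hM hsU _ ih =>
    rw [Finset.disjoint_union_left] at hUV
    rw [mul_assoc, Finset.union_assoc, Multiset.cons_add]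
    exact mul hc hM (Finset.disjoint_union_right.2 ⟨hsU, hUV.1⟩) (ih hUV.2)

theorem exists_mul_of_cons (hf : HasCycles M f U (x ::ₘ a)) :
    ∃ c s f' U', f = c * f' ∧ U = s ∪ U' ∧ s.card = x ∧ IsSingleCycle c s ∧ (∃ u ∈ s, u ∈ M) ∧
      Disjoint s U' ∧ HasCycles M f' U' a := by
  generalize hxa : x ::ₘ a = a' at hf
  induction hf generalizing a with
  | one => simp at hxa
  | @mul c f s U a₀ hc hM hsU hf ih =>
    obtain ⟨hx, rfl⟩ | ⟨-, a₁, rfl, rfl⟩ := Multiset.cons_eq_cons.1 hxa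
    · exact ⟨c, s, f, U, rfl, rfl, hx.symm, hc, hM, hsU, hf⟩
    · obtain ⟨c', s', f', U', rfl, rfl, hcard, hc', hM', hsU', hf'⟩ := ih rfl
      rw [Finset.disjoint_union_right] at hsU
      refine ⟨c', s', c * f', s ∪ U', ?_, Finset.union_left_comm _ _ _, hcard, hc', hM', ?_,
        mul hc hM hsU.2 hf'⟩
      · rw [← mul_assoc, ← mul_assoc, (commute_of_support_subset hc.2 hc'.2 hsU.1).eq]
      · exact Finset.disjoint_union_right.2 ⟨hsU.1.symm, hsU'⟩

theorem induction_on (hf : HasCycles M f U a) {P : α → Prop} (base : ∀ y ∈ M, P y)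
    (step : ∀ y, P y → P (f y)) : ∀ y ∈ U, P y := by
  induction hf with
  | one => simp
  | @mul c f s U a hc hM hsU hf ih =>
    obtain ⟨u, hus, huM⟩ := hM
    refine fun y hy => (Finset.mem_union.1 hy).elim (fun hys => ?_) (fun hyU => ?_)
    · refine hc.induction_on hus (base u huM) (fun z hz hPz => ?_) hys
      simpa [hf.apply_of_notMem (Finset.disjoint_left.1 hsU hz)] using step z hPz
    · refine ih (fun z hPz => ?_) y hyU
      by_cases hz : z ∈ U
      · have hfz : f z ∉ s := Finset.disjoint_right.1 hsU (hf.apply_mem_iff.2 hz)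
        simpa [hc.apply_of_notMem hfz] using step z hPz
      · rwa [hf.apply_of_notMem hz]

theorem exists_of_card_eq (a : Multiset ℕ) (ha : ∀ x ∈ a, 0 < x) (U : Finset α)
    (hU : U.card = a.sum) : ∃ f, HasCycles U f U a := by
  induction a using Multiset.induction generalizing U with
  | empty => exact ⟨1, by simpa [Finset.card_eq_zero.1 hU] using one⟩
  | cons x a ih =>
    rw [Multiset.forall_mem_cons] at ha
    rw [Multiset.sum_cons] at hU
    obtain ⟨s, hsU, rfl⟩ := Finset.exists_subset_card_eq (show x ≤ U.card by omega)
    obtain ⟨f, hf⟩ := ih ha.2 (U \ s) (by rw [Finset.card_sdiff_of_subset hsU]; omega)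
    obtain ⟨c, hc⟩ := s.exists_cycleOn
    obtain ⟨u, hu⟩ := Finset.card_pos.1 ha.1
    refine ⟨c * f, ?_⟩
    have h := mul hc ⟨u, hu, hsU hu⟩ Finset.disjoint_sdiff (hf.mono Finset.sdiff_subset)
    rwa [Finset.union_sdiff_of_subset hsU] at h

theorem cycleType_add_replicate (hf : HasCycles M f U a) :
    f.cycleType + Multiset.replicate (U.card - f.support.card) 1 = a := by
  induction hf with
  | one => simp
  | @mul c f s U a hc hM hsU hf ih =>
    have hcf : c.Disjoint f :=
      Perm.disjoint_iff_disjoint_support.2 (hsU.mono hc.2 hf.support_subset)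
    have hle : f.support.card ≤ U.card := Finset.card_le_card hf.support_subset
    rw [hcf.cycleType_mul, hcf.card_support_mul, Finset.card_union_of_disjoint hsU]
    obtain ⟨u, hu, -⟩ := hM
    obtain hs | hs := Nat.eq_or_lt_of_le (Finset.card_pos.2 ⟨u, hu⟩)
    · have hc1 : c = 1 := Perm.card_support_le_one.1 ((Finset.card_le_card hc.2).trans hs.ge)
      rw [hc1, Perm.cycleType_one, Perm.support_one, Finset.card_empty, ← hs, zero_add, zero_add,
        Nat.add_sub_assoc hle, Multiset.replicate_add, add_left_comm, ih, Multiset.replicate_one,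
        Multiset.singleton_add]
    · rw [hc.support_eq hs, (hc.isCycle hs).cycleType, hc.support_eq hs, Nat.add_sub_add_left,
        add_assoc, ih, Multiset.singleton_add]

theorem single (hc : IsSingleCycle c s) (hM : ∃ u ∈ s, u ∈ M) : HasCycles M c s {s.card} := by
  simpa using mul hc hM (Finset.disjoint_empty_right s) one

theorem swap_mul {u n : α} (hf : HasCycles M f U a) (hc : IsSingleCycle c s) (hsU : Disjoint s U)
    (hu : u ∈ s) (hn : n ∉ s ∪ U) (hM : n ∈ M) :
    HasCycles M (swap u n * c * f) (insert n (s ∪ U)) ((s.card + 1) ::ₘ a) := by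
  rw [Finset.notMem_union] at hn
  rw [← Finset.card_insert_of_notMem hn.1, ← Finset.insert_union]
  exact mul (hc.swap_mul hu hn.1) ⟨n, Finset.mem_insert_self _ _, hM⟩
    (Finset.disjoint_insert_left.2 ⟨hn.2, hsU⟩) hf

theorem swap_mul_mul_swap {u n n' : α} (hf : HasCycles M f U a) (hc : IsSingleCycle c s)
    (hsU : Disjoint s U) (hu : u ∈ s) (hn : n ∉ s ∪ U) (hn' : n' ∉ s ∪ U) (hnn' : n ≠ n')
    (hM : n ∈ M) :
    HasCycles M (swap u n * c * swap n n' * f) (insert n (insert n' (s ∪ U)))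
      ((s.card + 2) ::ₘ a) := by
  rw [Finset.notMem_union] at hn hn'
  have hcard : (insert n (insert n' s)).card = s.card + 2 := by
    rw [Finset.card_insert_of_notMem (by grind), Finset.card_insert_of_notMem hn'.1]
  rw [← hcard, ← Finset.insert_union, ← Finset.insert_union]
  refine mul (hc.swap_mul_mul_swap hu hn.1 hn'.1 hnn') ⟨n, Finset.mem_insert_self _ _, hM⟩ ?_ hf
  simp only [Finset.disjoint_insert_left]
  exact ⟨hn.2, hn'.2, hsU⟩

theorem swap_mul_mul {c' f' : Perm α} {s' U' : Finset α} {a' : Multiset ℕ} {u v : α}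
    (hf : HasCycles M f U a) (hf' : HasCycles M f' U' a') (hc : IsSingleCycle c s)
    (hc' : IsSingleCycle c' s') (hdisj : Disjoint (s ∪ U) (s' ∪ U')) (hsU : Disjoint s U)
    (hsU' : Disjoint s' U') (hu : u ∈ s) (hv : v ∈ s') (hM : ∃ z ∈ s, z ∈ M) :
    HasCycles M (swap u v * c * c' * (f * f')) (s ∪ U ∪ (s' ∪ U'))
      ((s.card + s'.card) ::ₘ (a + a')) := by
  simp only [Finset.disjoint_union_left, Finset.disjoint_union_right] at hdisj
  obtain ⟨⟨hss', hUs'⟩, hsU'', hUU'⟩ := hdisj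
  rw [← Finset.card_union_of_disjoint hss', Finset.union_union_union_comm]
  refine mul (hc.swap_mul_mul hc' hss' hu hv)
    (hM.imp fun z hz => ⟨Finset.mem_union_left s' hz.1, hz.2⟩) ?_ (hf.mul_of_disjoint hf' hUU')
  simp only [Finset.disjoint_union_left, Finset.disjoint_union_right]
  exact ⟨⟨hsU, hUs'.symm⟩, hsU'', hsU'⟩

theorem image_mul (hf : HasCycles M f U a) (hc : IsSingleCycle c s) (hsU : Disjoint s U)
    (hW : W ⊆ s) (hZ : Z ⊆ U) : (W ∪ Z).image (c * f) = W.image c ∪ Z.image f := by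
  rw [Finset.image_union]
  congr 1 <;> refine Finset.image_congr fun z hz => ?_
  · simp [hf.apply_of_notMem (Finset.disjoint_left.1 hsU (hW hz))]
  · have hfz : f z ∉ s := Finset.disjoint_right.1 hsU (hf.apply_mem_iff.2 (hZ hz))
    simp [hc.apply_of_notMem hfz]

theorem exists_transversal (ha : ∀ x ∈ a, 2 ≤ x) (hU : U.card = a.sum) :
    ∃ f Z, HasCycles Z f U a ∧ Z ⊆ U ∧ Z.card = a.card ∧ Disjoint Z (Z.image f) := by
  induction a using Multiset.induction generalizing U with
  | empty => exact ⟨1, ∅, by simpa [Finset.card_eq_zero.1 hU] using one⟩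
  | cons x a ih =>
    rw [Multiset.forall_mem_cons] at ha
    rw [Multiset.sum_cons] at hU
    obtain ⟨s, hsU, rfl⟩ := Finset.exists_subset_card_eq (show x ≤ U.card by omega)
    obtain ⟨f, Z, hf, hZU, hZ, hdisj⟩ := ih ha.2 (U := U \ s)
      (by rw [Finset.card_sdiff_of_subset hsU]; omega)
    obtain ⟨c, hc : IsSingleCycle c s⟩ := s.exists_cycleOn
    obtain ⟨u, hu⟩ := Finset.card_pos.1 (zero_lt_two.trans_le ha.1)
    have hcu : c u ≠ u := hc.1.apply_ne (Finset.one_lt_card_iff_nontrivial.1 ha.1) hu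
    have hcs : c u ∈ s := hc.apply_mem_iff.2 hu
    have hfZ : Z.image f ⊆ U \ s :=
      Finset.image_subset_iff.2 fun z hz => hf.apply_mem_iff.2 (hZU hz)
    refine ⟨c * f, {u} ∪ Z, ?_, by grind, ?_, ?_⟩
    · have h := mul hc ⟨u, hu, Finset.mem_union_left Z (Finset.mem_singleton_self u)⟩
        Finset.disjoint_sdiff (hf.mono Finset.subset_union_right)
      rwa [Finset.union_sdiff_of_subset hsU] at h
    · rw [← Finset.insert_eq, Finset.card_insert_of_notMem (by grind), hZ, Multiset.card_cons]
    · rw [hf.image_mul hc Finset.disjoint_sdiff (Finset.singleton_subset_iff.2 hu) hZU,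
        Finset.image_singleton]
      rw [Finset.disjoint_left] at hdisj ⊢
      grind

end HasCycles

/-! ### Transitive factorizations of a cycle -/

/-- `t₁` and `t₂` permute `U` with cycle types `a` and `b`, their product is a single cycle of
length `m + 1`, carried by `S ⊆ U`, and every cycle of `t₁` and of `t₂` meets `S`; in particular
`t₁` and `t₂` generate a group acting transitively on `U`. -/
structure CycleFactorization (t₁ t₂ : Perm α) (U S : Finset α) (a b : Multiset ℕ) (m : ℕ) :
    Prop where
  left : HasCycles S t₁ U a
  right : HasCycles S t₂ U b
  subset : S ⊆ U
  cycle : IsSingleCycle (t₁ * t₂) S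
  card : S.card = m + 1

namespace CycleFactorization

variable {t₁ t₂ t₁' t₂' : Perm α} {U U' S S' : Finset α} {a a' b b' : Multiset ℕ}
  {m m' x y i j : ℕ} {n₁ n₂ : α}

theorem symm (h : CycleFactorization t₁ t₂ U S a b m) :
    CycleFactorization t₂⁻¹ t₁⁻¹ U S b a m where
  left := h.right.inv
  right := h.left.inv
  subset := h.subset
  cycle := mul_inv_rev t₁ t₂ ▸ h.cycle.inv
  card := h.card

theorem exists_mul_right (h : CycleFactorization t₁ t₂ U S a (x ::ₘ b) m) :
    ∃ c s f V, t₂ = c * f ∧ U = s ∪ V ∧ Disjoint s V ∧ s.card = x ∧ IsSingleCycle c s ∧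
      HasCycles S f V b ∧ (∃ z ∈ s, z ∈ S) ∧ ∃ u ∈ s, t₁ u ∈ S := by
  obtain ⟨c, s, f, V, rfl, hU, hx, hc, ⟨z, hzs, hzS⟩, hsV, hf⟩ := h.right.exists_mul_of_cons
  refine ⟨c, s, f, V, rfl, hU, hsV, hx, hc, hf, ⟨z, hzs, hzS⟩, c z, hc.apply_mem_iff.2 hzs, ?_⟩
  have hfz : f z = z := hf.apply_of_notMem (Finset.disjoint_left.1 hsV hzs)
  simpa [hfz] using h.cycle.apply_mem_iff.2 hzS

theorem glue (h : CycleFactorization t₁ t₂ U S a (x ::ₘ b) m)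
    (h' : CycleFactorization t₁' t₂' U' S' a' (y ::ₘ b') m') (hdisj : Disjoint U U') :
    ∃ t, CycleFactorization (t₁ * t₁') t (U ∪ U') (S ∪ S') (a + a') ((x + y) ::ₘ (b + b'))
      (m + m' + 1) := by
  obtain ⟨c, s, f, V, rfl, rfl, hsV, rfl, hc, hf, ⟨z, hzs, hzS⟩, u, hus, huS⟩ := h.exists_mul_right
  obtain ⟨c', s', f', V', rfl, rfl, hsV', rfl, hc', hf', -, v, hvs, hvS⟩ := h'.exists_mul_right
  have hSS' : Disjoint S S' := hdisj.mono h.subset h'.subset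
  have hu : t₁' u = u :=
    h'.left.apply_of_notMem (Finset.disjoint_left.1 hdisj (Finset.mem_union_left V hus))
  have hv : t₁ (t₁' v) = t₁' v := h.left.apply_of_notMem
    (Finset.disjoint_right.1 hdisj (h'.left.apply_mem_iff.2 (Finset.mem_union_left V' hvs)))
  have hprod := glue_mul (f' := f') hu hv
    (commute_of_support_subset h.right.support_subset h'.left.support_subset hdisj)
    (hf.commute hc' (hdisj.symm.mono Finset.subset_union_left Finset.subset_union_right))
  refine ⟨swap u v * c * c' * (f * f'), ?_, ?_, Finset.union_subset_union h.subset h'.subset,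
    ?_, ?_⟩
  · exact (h.left.mono Finset.subset_union_left).mul_of_disjoint
      (h'.left.mono Finset.subset_union_right) hdisj
  · exact (hf.mono Finset.subset_union_left).swap_mul_mul (hf'.mono Finset.subset_union_right)
      hc hc' hdisj hsV hsV' hus hvs ⟨z, hzs, Finset.mem_union_left S' hzS⟩
  · rw [hprod]
    exact h.cycle.swap_mul_mul h'.cycle hSS' huS hvS
  · rw [Finset.card_union_of_disjoint hSS', h.card, h'.card]
    omega

theorem of_single {c : Perm α} (hc : IsSingleCycle c U) {u : α} (hu : u ∈ U) :
    CycleFactorization c c⁻¹ U {u} {U.card} {U.card} 0 where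
  left := .single hc ⟨u, hu, Finset.mem_singleton_self u⟩
  right := .single hc.inv ⟨u, hu, Finset.mem_singleton_self u⟩
  subset := Finset.singleton_subset_iff.2 hu
  cycle := mul_inv_cancel c ▸ .singleton u
  card := rfl

theorem add_handle (h : CycleFactorization t₁ t₂ U S (x ::ₘ a) (y ::ₘ b) m)
    (hn₁ : n₁ ∉ U) (hn₂ : n₂ ∉ U) (hn : n₁ ≠ n₂) :
    ∃ t₁' t₂', CycleFactorization t₁' t₂' (insert n₁ (insert n₂ U)) (insert n₁ (insert n₂ S))
      ((x + 2) ::ₘ a) ((y + 2) ::ₘ b) (m + 2) := by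
  obtain ⟨c₁, s₁, f₁, V₁, rfl, hU₁, rfl, hc₁, ⟨v, hvs, hvS⟩, hsV₁, hf₁⟩ :=
    h.left.exists_mul_of_cons
  obtain ⟨c₂, s₂, f₂, V₂, rfl, hU₂, hsV₂, rfl, hc₂, hf₂, -, u, hus, huS⟩ :=
    h.exists_mul_right
  have hprod := add_handle_mul (f₂ := f₂) v (show u ≠ n₁ by grind) (show u ≠ n₂ by grind)
    (hf₁.apply_of_notMem (by grind)) (hf₁.apply_of_notMem (by grind))
    (hc₂.apply_of_notMem (by grind)) (hc₂.apply_of_notMem (by grind))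
    (hc₁.apply_of_notMem (by grind))
  have hS₁ : n₁ ∉ S := fun hS => hn₁ (h.subset hS)
  have hS₂ : n₂ ∉ S := fun hS => hn₂ (h.subset hS)
  have hM : S ⊆ insert n₁ (insert n₂ S) := by grind
  refine ⟨_, _, ?_, ?_, Finset.insert_subset_insert _ (Finset.insert_subset_insert _ h.subset),
    hprod ▸ (h.cycle.swap_mul huS hS₂).swap_mul (Finset.mem_insert_of_mem hvS) (by grind), ?_⟩
  · subst hU₁
    exact (hf₁.mono hM).swap_mul_mul_swap hc₁ hsV₁ hvs hn₁ hn₂ hn (Finset.mem_insert_self _ _)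
  · subst hU₂
    exact (hf₂.mono hM).swap_mul_mul_swap hc₂ hsV₂ hus hn₁ hn₂ hn (Finset.mem_insert_self _ _)
  · rw [Finset.card_insert_of_notMem (by grind), Finset.card_insert_of_notMem hS₂, h.card]

theorem split_edge (h : CycleFactorization t₁ t₂ U U a ((i + j) ::ₘ b) m) (hi : 0 < i) (hj : 0 < j)
    (hn₁ : n₁ ∉ U) (hn₂ : n₂ ∉ U) (hn : n₁ ≠ n₂) :
    ∃ t₁' t₂', CycleFactorization t₁' t₂' (insert n₁ (insert n₂ U)) (insert n₁ (insert n₂ U))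
      (2 ::ₘ a) ((i + 1) ::ₘ (j + 1) ::ₘ b) (m + 2) := by
  obtain ⟨c, s, f, V, rfl, hU, hsV, hs, hc, hf, -⟩ := h.exists_mul_right
  obtain ⟨u, v, c₁, s₁, c₂, s₂, rfl, rfl, hs₁₂, hu, hv, rfl, rfl, hc₁, hc₂⟩ :=
    hc.exists_eq_swap_mul_mul hs hi hj
  have hvs₁ : v ∉ s₁ := Finset.disjoint_right.1 hs₁₂ hv
  have huv : u ≠ v := fun huv => hvs₁ (huv ▸ hu)
  have hprod := split_edge_mul (c₂ := c₂) (f := f) huv (by grind) (by grind) (by grind) hn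
    (h.left.apply_of_notMem hn₁) (h.left.apply_of_notMem hn₂) (hc₁.apply_of_notMem hvs₁)
    (hc₁.apply_of_notMem (by grind))
  have hM : U ⊆ insert n₁ (insert n₂ U) := by grind
  have hu' : t₁ u ∈ insert n₂ U := Finset.mem_insert_of_mem (h.left.apply_mem_iff.2 (by grind))
  have hv' : t₁ v ∈ U := h.left.apply_mem_iff.2 (by grind)
  have hn₁' : n₁ ∉ insert n₂ U := by grind
  refine ⟨_, _, ?_, ?_, subset_rfl, hprod ▸ (h.cycle.swap_mul hv' hn₂).swap_mul hu' hn₁', ?_⟩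
  · simpa [hn] using (h.left.mono hM).mul (.swap hn)
      ⟨n₁, Finset.mem_insert_self _ _, Finset.mem_insert_self _ _⟩ (by simp [hn₁, hn₂])
  · rw [Finset.disjoint_union_left] at hsV
    have h₂ := (hf.mono hM).swap_mul hc₂ hsV.2 hv (n := n₂) (by grind) (by grind)
    have h₁ := h₂.swap_mul hc₁ (by simp [hs₁₂, hsV.1]; grind) hu (n := n₁) (by grind) (by grind)
    rwa [Finset.union_insert, ← Finset.union_assoc, ← hU] at h₁
  · rw [Finset.card_insert_of_notMem hn₁', Finset.card_insert_of_notMem hn₂, h.card]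

theorem commutator {t : Perm α} {Z : Finset α} {k : ℕ} {p : α} (ht : HasCycles Z t U a)
    (hZU : Z ⊆ U) (hcard : Z.card = k + 1) (hp : Z.image t ∩ Z = {p}) :
    ∃ t₂ S, CycleFactorization t t₂ U S a a (2 * k) := by
  obtain ⟨c, hc : IsSingleCycle c Z⟩ := Z.exists_cycleOn
  -- `t * (c * t⁻¹ * c⁻¹) = (t * c * t⁻¹) * c⁻¹` is a product of two cycles that meet only in `p`.
  refine ⟨c * t⁻¹ * c⁻¹, Z.image t ∪ Z, ht.mono Finset.subset_union_right, ?_,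
    Finset.union_subset ?_ hZU, ?_, ?_⟩
  · have h := ht.inv.conj c
    rw [hc.image_eq subset_rfl, hc.image_eq hZU] at h
    exact h.mono Finset.subset_union_right
  · exact Finset.image_subset_iff.2 fun z hz => ht.apply_mem_iff.2 (hZU hz)
  · have h := (hc.conj t).mul hc.inv hp
    simpa only [mul_assoc] using h
  · have h := Finset.card_union_add_card_inter (Z.image t) Z
    rw [hp, Finset.card_singleton, Finset.card_image_of_injective _ t.injective, hcard] at h
    omega

theorem exists_closure_apply_eq (h : CycleFactorization t₁ t₂ .univ S a b m) (x y : α) :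
    ∃ π ∈ Subgroup.closure {t₁, t₂}, π x = y := by
  have ht₁ : t₁ ∈ Subgroup.closure {t₁, t₂} := Subgroup.subset_closure (by simp)
  have ht₂ : t₂ ∈ Subgroup.closure {t₁, t₂} := Subgroup.subset_closure (by simp)
  obtain ⟨s, hs⟩ := Finset.card_pos.1 (m.succ_pos.trans_eq h.card.symm)
  have hreach : ∀ y ∈ Finset.univ, ∃ π ∈ Subgroup.closure {t₁, t₂}, π s = y := by
    refine h.left.induction_on (fun y hy => ?_) ?_
    · refine h.cycle.induction_on (P := fun y => ∃ π ∈ Subgroup.closure {t₁, t₂}, π s = y) hs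
        ⟨1, one_mem _, rfl⟩ ?_ hy
      rintro _ - ⟨π, hπ, rfl⟩
      exact ⟨t₁ * t₂ * π, mul_mem (mul_mem ht₁ ht₂) hπ, rfl⟩
    · rintro _ ⟨π, hπ, rfl⟩
      exact ⟨t₁ * π, mul_mem ht₁ hπ, rfl⟩
  obtain ⟨π, hπ, rfl⟩ := hreach x (Finset.mem_univ x)
  obtain ⟨ρ, hρ, rfl⟩ := hreach y (Finset.mem_univ y)
  exact ⟨ρ * π⁻¹, mul_mem hρ (inv_mem hπ), by simp⟩

end CycleFactorization

variable (α) in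
/-- On every subset of `α` of the appropriate size, there is a `CycleFactorization` with
numerical data `(a, b, m)`; this is vacuous if `α` has fewer points. -/
def Realizable (a b : Multiset ℕ) (m : ℕ) : Prop :=
  ∀ U : Finset α, U.card = a.sum → ∃ t₁ t₂ S, CycleFactorization t₁ t₂ U S a b m

namespace Realizable

variable {a a' b b' : Multiset ℕ} {m m' x y i j k n g : ℕ}

theorem symm (h : Realizable α a b m) (hab : a.sum = b.sum) : Realizable α b a m := fun U hU =>
  let ⟨t₁, t₂, S, ht⟩ := h U (hU.trans hab.symm)
  ⟨t₂⁻¹, t₁⁻¹, S, ht.symm⟩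

theorem single (hn : 0 < n) : Realizable α {n} {n} 0 := fun U hU => by
  rw [Multiset.sum_singleton] at hU
  obtain ⟨u, hu⟩ := Finset.card_pos.1 (hU ▸ hn)
  obtain ⟨c, hc⟩ := U.exists_cycleOn
  exact ⟨c, c⁻¹, {u}, hU ▸ .of_single hc hu⟩

theorem glue (h : Realizable α a (x ::ₘ b) m) (h' : Realizable α a' (y ::ₘ b') m') :
    Realizable α (a + a') ((x + y) ::ₘ (b + b')) (m + m' + 1) := fun U hU => by
  rw [Multiset.sum_add] at hU
  obtain ⟨V, hVU, hV⟩ := Finset.exists_subset_card_eq (show a.sum ≤ U.card by omega)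
  obtain ⟨t₁, t₂, S, ht⟩ := h V hV
  obtain ⟨t₁', t₂', S', ht'⟩ := h' (U \ V) (by rw [Finset.card_sdiff_of_subset hVU]; omega)
  obtain ⟨t, h⟩ := ht.glue ht' Finset.disjoint_sdiff
  exact ⟨_, t, _, Finset.union_sdiff_of_subset hVU ▸ h⟩

theorem add_handle (h : Realizable α (x ::ₘ a) (y ::ₘ b) m) :
    Realizable α ((x + 2) ::ₘ a) ((y + 2) ::ₘ b) (m + 2) := fun U hU => by
  obtain ⟨n₁, n₂, V, hn₁, hn₂, hn, hV, rfl⟩ := exists_eq_insert_insert (k := (x ::ₘ a).sum)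
    (by rw [hU, Multiset.sum_cons, Multiset.sum_cons]; omega)
  obtain ⟨t₁, t₂, S, ht⟩ := h V hV
  obtain ⟨t₁', t₂', ht'⟩ := ht.add_handle hn₁ hn₂ hn
  exact ⟨t₁', t₂', _, ht'⟩

theorem split_edge (h : Realizable α a ((i + j) ::ₘ b) m) (hm : m + 1 = a.sum)
    (hi : 0 < i) (hj : 0 < j) :
    Realizable α (2 ::ₘ a) ((i + 1) ::ₘ (j + 1) ::ₘ b) (m + 2) := fun U hU => by
  obtain ⟨n₁, n₂, V, hn₁, hn₂, hn, hV, rfl⟩ := exists_eq_insert_insert (k := a.sum)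
    (by rw [hU, Multiset.sum_cons, add_comm])
  obtain ⟨t₁, t₂, S, ht⟩ := h V hV
  obtain rfl : S = V := Finset.eq_of_subset_of_card_le ht.subset (by rw [hV, ht.card, hm])
  obtain ⟨t₁', t₂', ht'⟩ := ht.split_edge hi hj hn₁ hn₂ hn
  exact ⟨t₁', t₂', _, ht'⟩

theorem star (a : Multiset ℕ) (hx : 0 < x) (ha : ∀ y ∈ a, 0 < y) :
    Realizable α (x ::ₘ a) {x + a.sum} a.card := by
  induction a using Multiset.induction generalizing x with
  | empty => simpa using single hx
  | cons y a ih =>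
    rw [Multiset.forall_mem_cons] at ha
    simpa [Multiset.cons_swap] using (single hx).glue (b := 0) (b' := 0) (ih ha.1 ha.2)

theorem two_two_four : Realizable α {2, 2} {4} 3 := fun U hU => by
  obtain ⟨w, x, y, z, hwx, hwy, hwz, hxy, hxz, hyz, rfl⟩ := Finset.card_eq_four.1 hU
  have h₁ : HasCycles {w, x, y, z} (swap w y * swap x z) {w, x, y, z} {2, 2} := by
    have h := HasCycles.mul (M := {w, x, y, z}) (.swap hwy) ⟨w, by simp⟩
      (by rw [Finset.disjoint_left]; grind) (.single (.swap hxz) ⟨x, by simp⟩)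
    rwa [Finset.card_pair hwy, Finset.card_pair hxz,
      show {w, y} ∪ {x, z} = ({w, x, y, z} : Finset α) by grind] at h
  have hc : IsSingleCycle (swap w z * (swap w y * swap w x)) {w, x, y, z} := by
    have h := (IsSingleCycle.swap hwx).swap_mul (u := w) (n := y) (by simp) (by grind)
    have h := h.swap_mul (u := w) (n := z) (by simp) (by grind)
    rwa [show insert z (insert y {w, x}) = ({w, x, y, z} : Finset α) by grind] at h
  have hprod : swap w y * swap x z * (swap w z * (swap w y * swap w x)) =
      (swap w z * (swap w y * swap w x))⁻¹ := by
    ext v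
    simp only [Perm.mul_apply, mul_inv_rev, swap_inv, swap_apply_def]
    grind
  refine ⟨_, _, _, h₁, ?_, subset_rfl, hprod ▸ hc.inv, hU⟩
  rw [show 4 = Finset.card {w, x, y, z} from hU.symm]
  exact .single hc ⟨w, by simp⟩

theorem twos_single (k : ℕ) :
    Realizable α (.replicate (2 * (k + 1)) 2) {4 * (k + 1)} (4 * k + 3) := by
  induction k with
  | zero => exact two_two_four
  | succ k ih =>
    have h := two_two_four.glue (b := 0) (b' := 0) ih
    have htwos : Multiset.replicate (2 * (k + 1 + 1)) 2 = {2, 2} + .replicate (2 * (k + 1)) 2 := by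
      rw [mul_add_one, add_comm, Multiset.replicate_add]
      rfl
    rw [htwos, mul_add_one 4 (k + 1), add_comm _ 4]
    rwa [show 3 + (4 * k + 3) + 1 = 4 * (k + 1) + 3 by omega] at h

theorem twos (hb : ∀ y ∈ b, 2 ≤ y) (hsum : b.sum = 2 * (k + 1))
    (hcard : b.card + 2 * g = k + 2) : Realizable α (.replicate (k + 1) 2) b (2 * k + 1) := by
  induction k generalizing b with
  | zero =>
    have h := b.card_nsmul_le_sum hb
    rw [hsum, smul_eq_mul] at h
    obtain rfl : b = 0 := Multiset.card_eq_zero.1 (by omega)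
    simp at hsum
  | succ k ih =>
    cases b using Multiset.induction with
    | empty => simp at hsum
    | cons y₁ b =>
      cases b using Multiset.induction with
      | empty =>
        obtain rfl : y₁ = 2 * (k + 1 + 1) := by simpa using hsum
        rw [Multiset.card_cons, Multiset.card_zero] at hcard
        obtain ⟨g, rfl⟩ := Nat.exists_eq_add_one.2 (show 0 < g by omega)
        obtain rfl : k = 2 * g := by omega
        rw [show 2 * g + 1 + 1 = 2 * (g + 1) by ring, ← mul_assoc,
          show 2 * (2 * g + 1) + 1 = 4 * g + 3 by ring]
        exact twos_single g
      | cons y₂ b =>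
        simp only [Multiset.forall_mem_cons] at hb
        simp only [Multiset.sum_cons] at hsum
        simp only [Multiset.card_cons] at hcard
        obtain ⟨i, rfl⟩ := Nat.exists_eq_add_one.2 (zero_lt_two.trans_le hb.1)
        obtain ⟨j, rfl⟩ := Nat.exists_eq_add_one.2 (zero_lt_two.trans_le hb.2.1)
        have h := ih (b := (i + j) ::ₘ b)
          (Multiset.forall_mem_cons.2 ⟨by omega, hb.2.2⟩)
          (by rw [Multiset.sum_cons]; omega) (by rw [Multiset.card_cons]; omega)
        exact h.split_edge (by simp; omega) (by omega) (by omega)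

theorem commutator (hx : 3 ≤ x) (ha : ∀ y ∈ a, 2 ≤ y) :
    Realizable α (x ::ₘ a) (x ::ₘ a) (2 * (a.card + 1)) := fun U hU => by
  rw [Multiset.sum_cons] at hU
  obtain ⟨s, hsU, rfl⟩ := Finset.exists_subset_card_eq (show x ≤ U.card by omega)
  obtain ⟨f, Z, hf, hZU, hZ, hdisj⟩ := HasCycles.exists_transversal ha (U := U \ s)
    (by rw [Finset.card_sdiff_of_subset hsU]; omega)
  obtain ⟨c, hc : IsSingleCycle c s⟩ := s.exists_cycleOn
  obtain ⟨u, hu⟩ := Finset.card_pos.1 (show 0 < s.card by omega)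
  have hcs : c u ∈ s := hc.apply_mem_iff.2 hu
  have hccs : c (c u) ∈ s := hc.apply_mem_iff.2 hcs
  have hccu : c (c u) ≠ u := hc.apply_apply_ne hu hx
  have hcu : c u ≠ u := fun h => hccu (by rw [h, h])
  have hfZ : Z.image f ⊆ U \ s :=
    Finset.image_subset_iff.2 fun z hz => hf.apply_mem_iff.2 (hZU hz)
  have hW : {u, c u} ⊆ s := by grind
  have ht : HasCycles ({u, c u} ∪ Z) (c * f) U (s.card ::ₘ a) := by
    have h := HasCycles.mul (M := {u, c u} ∪ Z) hc ⟨u, hu, by simp⟩ Finset.disjoint_sdiff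
      (hf.mono Finset.subset_union_right)
    rwa [Finset.union_sdiff_of_subset hsU] at h
  obtain ⟨t₂, S, h⟩ := CycleFactorization.commutator (k := a.card + 1) (p := c u) ht (by grind)
    (by rw [Finset.card_union_of_disjoint (by rw [Finset.disjoint_left]; grind),
      Finset.card_pair hcu.symm, hZ, add_comm])
    (by
      rw [hf.image_mul hc Finset.disjoint_sdiff hW hZU, Finset.image_insert,
        Finset.image_singleton]
      rw [Finset.disjoint_left] at hdisj
      grind)
  exact ⟨_, t₂, S, h⟩

end Realizable

/-! ### Realizability of admissible data -/

/-- The numerical conditions on `(a, b, m)` under which a `CycleFactorization` of genus `g` is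
constructed. The equation on cardinalities is the Riemann-Hurwitz formula. -/
structure Admissible (a b : Multiset ℕ) (m g : ℕ) : Prop where
  left_pos : ∀ x ∈ a, 0 < x
  right_pos : ∀ y ∈ b, 0 < y
  sum_eq : a.sum = b.sum
  lt_sum : m < a.sum
  card_add_card : a.card + b.card + 2 * g = m + 2
  genus_pos_or_eq : 0 < g ∨ m + 1 = a.sum

namespace Admissible

variable {a b : Multiset ℕ} {m g x y β : ℕ}

theorem symm (h : Admissible a b m g) : Admissible b a m g where
  left_pos := h.right_pos
  right_pos := h.left_pos
  sum_eq := h.sum_eq.symm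
  lt_sum := h.sum_eq ▸ h.lt_sum
  card_add_card := add_comm a.card b.card ▸ h.card_add_card
  genus_pos_or_eq := h.sum_eq ▸ h.genus_pos_or_eq

theorem of_glue (h : Admissible (x ::ₘ a) ((x + y) ::ₘ b) (m + 1) g) (hy : 0 < y)
    (hm : m < a.sum) : Admissible a (y ::ₘ b) m g := by
  obtain ⟨hx, hb, hsum, hlt, hcard, hg⟩ := h
  simp only [Multiset.forall_mem_cons, Multiset.sum_cons, Multiset.card_cons] at *
  refine ⟨hx.2, Multiset.forall_mem_cons.2 ⟨hy, hb.2⟩, ?_, hm, ?_, ?_⟩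
  · rw [Multiset.sum_cons]; omega
  · rw [Multiset.card_cons]; omega
  · omega

theorem of_add_handle (h : Admissible ((x + 2) ::ₘ a) ((y + 2) ::ₘ b) (m + 2) (g + 1))
    (hx : 0 < x) (hy : 0 < y) (hg : 0 < g ∨ m + 1 = (x ::ₘ a).sum) :
    Admissible (x ::ₘ a) (y ::ₘ b) m g := by
  obtain ⟨ha, hb, hsum, hlt, hcard, -⟩ := h
  simp only [Multiset.forall_mem_cons, Multiset.sum_cons, Multiset.card_cons] at *
  refine ⟨Multiset.forall_mem_cons.2 ⟨hx, ha.2⟩, Multiset.forall_mem_cons.2 ⟨hy, hb.2⟩,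
    ?_, ?_, ?_, ?_⟩ <;> simp only [Multiset.sum_cons, Multiset.card_cons] <;> omega

-- If the smallest part `β` is too large for `of_glue`, then the genus suffices for `of_add_handle`.
theorem genus_bound (h : Admissible a b m g) (hβ : β ∈ a) (ha : ∀ x ∈ a, β ≤ x)
    (hb : ∀ y ∈ b, β ≤ y) (hy : y ∈ b) (hβy : β < y) (hm : a.sum < m + β) :
    1 < g ∨ 0 < g ∧ m + 1 = a.sum := by
  obtain ⟨a, rfl⟩ := Multiset.exists_cons_of_mem hβ
  obtain ⟨b, rfl⟩ := Multiset.exists_cons_of_mem hy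
  have hpa := a.card_nsmul_le_sum fun z hz => ha z (Multiset.mem_cons_of_mem hz)
  have hqb := b.card_nsmul_le_sum fun z hz => hb z (Multiset.mem_cons_of_mem hz)
  obtain ⟨-, -, hsum, hlt, hcard, hg⟩ := h
  simp only [Multiset.sum_cons, Multiset.card_cons, smul_eq_mul] at *
  have hβA : β ≤ a.sum := by
    obtain rfl | ⟨z, hz⟩ := a.empty_or_exists_mem
    · simp only [Multiset.sum_zero] at hsum
      omega
    · exact (ha z (Multiset.mem_cons_of_mem hz)).trans (Multiset.le_sum_of_mem hz)
  generalize a.card = p at *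
  generalize b.card = q at *
  generalize a.sum = A at *
  by_contra! hcon
  obtain rfl | rfl : g = 0 ∨ g = 1 := by omega
  · nlinarith
  · have hβ3 : 3 ≤ β := by omega
    nlinarith

end Admissible

namespace Realizable

variable {a b : Multiset ℕ} {m n g h x y k : ℕ}

theorem of_replicate_two (h : Admissible (.replicate k 2) b m g) (hb : ∀ y ∈ b, 2 ≤ y)
    (hm : m + 1 = 2 * k) : Realizable α (.replicate k 2) b m := by
  have hsum := h.sum_eq
  have hcard := h.card_add_card
  rw [Multiset.sum_replicate, smul_eq_mul] at hsum
  rw [Multiset.card_replicate] at hcard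
  obtain ⟨k, rfl⟩ := Nat.exists_eq_add_one.2 (show 0 < k by omega)
  obtain rfl : m = 2 * k + 1 := by omega
  exact twos (g := g) hb (by omega) (by omega)

theorem of_two_lt (h : Admissible a b m g)
    (ih : ∀ {a' b' m' g'}, Admissible a' b' m' g' → a'.sum < a.sum → Realizable α a' b' m')
    (hx : x ∈ a) (hx2 : 2 < x) (hy : y ∈ b) (hy2 : 2 < y)
    (hg : 1 < g ∨ 0 < g ∧ m + 1 = a.sum) : Realizable α a b m := by
  obtain ⟨a, rfl⟩ := Multiset.exists_cons_of_mem hx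
  obtain ⟨b, rfl⟩ := Multiset.exists_cons_of_mem hy
  have hcard := h.card_add_card
  rw [Multiset.card_cons, Multiset.card_cons] at hcard
  obtain ⟨x, rfl⟩ := Nat.exists_eq_add_of_le' hx2.le
  obtain ⟨y, rfl⟩ := Nat.exists_eq_add_of_le' hy2.le
  obtain ⟨g, rfl⟩ := Nat.exists_eq_add_one.2 (show 0 < g by omega)
  obtain ⟨m, rfl⟩ := Nat.exists_eq_add_of_le' (show 2 ≤ m by omega)
  rw [Multiset.sum_cons] at hg ih
  have h' := h.of_add_handle (by omega) (by omega) (by rw [Multiset.sum_cons]; omega)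
  exact (ih h' (by rw [Multiset.sum_cons]; omega)).add_handle

theorem of_add_le (h : Admissible a b m g)
    (ih : ∀ {a' b' m' g'}, Admissible a' b' m' g' → a'.sum < a.sum → Realizable α a' b' m')
    (hx : x ∈ a) (hy : y ∈ b) (hxy : x < y) (hm : m + x ≤ a.sum) : Realizable α a b m := by
  obtain ⟨a, rfl⟩ := Multiset.exists_cons_of_mem hx
  obtain ⟨b, rfl⟩ := Multiset.exists_cons_of_mem hy
  obtain ⟨y, rfl⟩ := Nat.exists_eq_add_of_lt hxy
  have hm0 : m ≠ 0 := by
    rintro rfl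
    have hcard := h.card_add_card
    have hsum := h.sum_eq
    simp only [Multiset.card_cons] at hcard
    obtain rfl : a = 0 := Multiset.card_eq_zero.1 (by omega)
    simp only [Multiset.sum_cons, Multiset.sum_zero] at hsum
    omega
  obtain ⟨m, rfl⟩ := Nat.exists_eq_succ_of_ne_zero hm0
  have hx0 : 0 < x := h.left_pos x hx
  rw [Multiset.sum_cons] at hm ih
  have h' := ih (h.of_glue y.succ_pos (by omega)) (by omega)
  simpa [add_assoc] using (single hx0).glue (b := 0) h'

theorem of_lt (h : Admissible a b m g)
    (ih : ∀ {a' b' m' g'}, Admissible a' b' m' g' → a'.sum < a.sum → Realizable α a' b' m')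
    (hx : x ∈ a) (ha : ∀ z ∈ a, x ≤ z) (hb : ∀ z ∈ b, x ≤ z) (hy : y ∈ b) (hxy : x < y) :
    Realizable α a b m := by
  obtain hm | hm := le_or_gt (m + x) a.sum
  · exact of_add_le h ih hx hy hxy hm
  have hlt := h.lt_sum
  by_cases hz : ∃ z ∈ a, 2 < z
  · obtain ⟨z, hz, hz2⟩ := hz
    exact of_two_lt h ih hz hz2 hy (by omega) (h.genus_bound hx ha hb hy hxy hm)
  · push Not at hz
    obtain rfl : x = 2 := (hz x hx).antisymm (by omega)
    obtain ⟨k, rfl⟩ : ∃ k, a = .replicate k 2 :=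
      ⟨_, Multiset.eq_replicate_card.2 fun z hza => (hz z hza).antisymm (ha z hza)⟩
    rw [Multiset.sum_replicate, smul_eq_mul] at hlt hm
    exact of_replicate_two h hb (by omega)

theorem of_replicate (h : Admissible (.replicate k x) (.replicate k x) m g)
    (ih : ∀ {a' b' m' g'}, Admissible a' b' m' g' → a'.sum < (Multiset.replicate k x).sum →
      Realizable α a' b' m') : Realizable α (.replicate k x) (.replicate k x) m := by
  have hlt := h.lt_sum
  have hcard := h.card_add_card
  have hg := h.genus_pos_or_eq
  simp only [Multiset.card_replicate, Multiset.sum_replicate, smul_eq_mul] at hlt hcard hg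
  obtain rfl | rfl | hx : x = 1 ∨ x = 2 ∨ 2 < x := by
    have : x ≠ 0 := by rintro rfl; simp at hlt
    omega
  · obtain ⟨rfl, rfl⟩ : k = 1 ∧ m = 0 := by omega
    simpa using single (α := α) one_pos
  · omega
  obtain ⟨k, rfl⟩ := Nat.exists_eq_add_one.2 (Nat.pos_of_mul_pos_right (m.zero_le.trans_lt hlt))
  obtain hg | rfl : 1 < g ∨ g = 1 := by
    by_contra! hcon
    obtain rfl : g = 0 := by omega
    have hm := hg.resolve_left (lt_irrefl 0)
    nlinarith
  · exact of_two_lt h ih (by simp) hx (by simp) hx (.inl hg)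
  · obtain rfl : m = 2 * (k + 1) := by omega
    simpa using commutator (α := α) (a := .replicate k x) hx fun y hy => by
      rw [Multiset.eq_of_mem_replicate hy]; omega

theorem of_forall_le (h : Admissible a b m g)
    (ih : ∀ {a' b' m' g'}, Admissible a' b' m' g' → a'.sum < a.sum → Realizable α a' b' m')
    (hx : x ∈ a) (ha : ∀ z ∈ a, x ≤ z) (hb : ∀ z ∈ b, x ≤ z) : Realizable α a b m := by
  by_cases hb' : ∃ y ∈ b, x < y
  · obtain ⟨y, hy, hxy⟩ := hb'
    exact of_lt h ih hx ha hb hy hxy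
  push Not at hb'
  obtain ⟨l, rfl⟩ : ∃ l, b = .replicate l x :=
    ⟨_, Multiset.eq_replicate_card.2 fun y hy => (hb' y hy).antisymm (hb y hy)⟩
  have hsum := h.sum_eq
  have hlt := h.lt_sum
  rw [Multiset.sum_replicate, smul_eq_mul] at hsum
  have hl : l ≠ 0 := by rintro rfl; omega
  by_cases ha' : ∃ y ∈ a, x < y
  · obtain ⟨y, hy, hxy⟩ := ha'
    have hx' : x ∈ Multiset.replicate l x := Multiset.mem_replicate.2 ⟨hl, rfl⟩
    exact (of_lt h.symm (h.sum_eq ▸ ih) hx' hb ha hy hxy).symm h.sum_eq.symm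
  push Not at ha'
  obtain ⟨k, rfl⟩ : ∃ k, a = .replicate k x :=
    ⟨_, Multiset.eq_replicate_card.2 fun y hy => (ha' y hy).antisymm (ha y hy)⟩
  rw [Multiset.sum_replicate, smul_eq_mul] at hsum
  obtain rfl : k = l := Nat.eq_of_mul_eq_mul_right (h.left_pos x hx) hsum
  exact of_replicate h ih

theorem of_admissible (h : Admissible a b m g) : Realizable α a b m := by
  induction hn : a.sum using Nat.strong_induction_on generalizing a b m g with
  | _ n ih =>
    subst hn
    have ih' : ∀ {a' b' m' g'}, Admissible a' b' m' g' → a'.sum < a.sum → Realizable α a' b' m' :=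
      fun h' hlt => ih _ hlt h' rfl
    have hab : (a + b).toFinset.Nonempty := by
      rw [Multiset.toFinset_nonempty]
      intro hab
      have hlt := h.lt_sum
      simp [(add_eq_zero.1 hab).1] at hlt
    obtain ⟨x, hx, hmin⟩ := (a + b).toFinset.exists_min_image id hab
    simp only [Multiset.mem_toFinset, Multiset.mem_add, or_imp, forall_and, id] at hx hmin
    obtain hx | hx := hx
    · exact of_forall_le h ih' hx hmin.1 hmin.2
    · exact (of_forall_le h.symm (h.sum_eq ▸ ih') hx hmin.2 hmin.1).symm h.sum_eq.symm

theorem to_single (ha : ∀ x ∈ a, 0 < x) (hcard : a.card + 2 * h = m + 1) (hm : m < a.sum) :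
    Realizable α a {a.sum} m := by
  obtain rfl | hh := h.eq_zero_or_pos
  · obtain ⟨x, a, rfl⟩ : ∃ x a', a = x ::ₘ a' :=
      let ⟨x, hx⟩ := a.empty_or_exists_mem.resolve_left (by rintro rfl; simp at hm)
      ⟨x, Multiset.exists_cons_of_mem hx⟩
    rw [Multiset.forall_mem_cons] at ha
    obtain rfl : a.card = m := by simpa using hcard
    simpa using star a ha.1 ha.2
  · refine of_admissible (g := h) ⟨ha, ?_, ?_, hm, ?_, .inl hh⟩ <;> simp <;> omega

theorem to_pair (ha : ∀ x ∈ a, 0 < x) (hsum : a.sum = 1 + n) (hcard : a.card + 2 * h = m)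
    (hm : m < a.sum) : Realizable α a {1, n} m := by
  obtain rfl | hh := h.eq_zero_or_pos
  · obtain ⟨x, hx, hx1⟩ : ∃ x ∈ a, 1 < x := by
      by_contra! hle
      have h1 := a.sum_le_card_nsmul 1 hle
      rw [smul_eq_mul] at h1
      omega
    obtain ⟨a, rfl⟩ := Multiset.exists_cons_of_mem hx
    obtain ⟨x, rfl⟩ := Nat.exists_eq_add_of_lt hx1
    rw [Multiset.forall_mem_cons] at ha
    rw [Multiset.card_cons] at hcard
    rw [Multiset.sum_cons] at hsum
    obtain rfl : n = x + 1 + a.sum := by omega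
    obtain rfl : m = a.card + 1 := by omega
    have hglue := (single (α := α) one_pos).glue (b := 0)
      ((star a x.succ_pos ha.2).symm (by simp))
    simpa [add_assoc] using hglue.symm (by simp; omega)
  · refine of_admissible (g := h) ⟨ha, ?_, ?_, hm, ?_, .inl hh⟩ <;> simp <;> omega

end Realizable

end

/-! ### Combining two factorizations -/

section

variable {d : ℕ}

theorem fullCycleType_eq_iff_isConj {σ τ : Perm (Fin d)} :
    fullCycleType σ = fullCycleType τ ↔ IsConj σ τ := by
  rw [Perm.partition_eq_of_isConj, Nat.Partition.ext_iff, Perm.parts_partition,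
    Perm.parts_partition, Fintype.card_fin]
  rfl

theorem fullCycleType_conj (k f : Perm (Fin d)) : fullCycleType (k * f * k⁻¹) = fullCycleType f :=
  fullCycleType_eq_iff_isConj.2 (isConj_iff.2 ⟨k, rfl⟩).symm

theorem fullCycleType_inv (f : Perm (Fin d)) : fullCycleType f⁻¹ = fullCycleType f := by
  rw [fullCycleType, Perm.cycleType_inv, Perm.support_inv, fullCycleType]

theorem HasCycles.fullCycleType_eq {M : Finset (Fin d)} {f : Perm (Fin d)} {a : Multiset ℕ}
    (hf : HasCycles M f .univ a) : fullCycleType f = a := by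
  simpa [fullCycleType] using hf.cycleType_add_replicate

/-- `t₁` and `t₂` have cycle types `a` and `b`, and their product is a cycle of length `m + 1`.
Unlike in a `CycleFactorization`, they need not generate a transitive group. -/
structure IsCyclePair (t₁ t₂ : Perm (Fin d)) (a b : Multiset ℕ) (m : ℕ) : Prop where
  left : fullCycleType t₁ = a
  right : fullCycleType t₂ = b
  isCycle : (t₁ * t₂).IsCycle
  card_support : (t₁ * t₂).support.card = m + 1

theorem Realizable.exists_isCyclePair {a b : Multiset ℕ} {m : ℕ}
    (h : Realizable (Fin d) a b m) (ha : a.sum = d) (hm : 0 < m) :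
    ∃ t₁ t₂, IsCyclePair t₁ t₂ a b m ∧
      ∀ x y : Fin d, ∃ π ∈ Subgroup.closure {t₁, t₂}, π x = y := by
  obtain ⟨t₁, t₂, S, ht⟩ := h .univ (by rw [Finset.card_fin, ha])
  have hS : 1 < S.card := by rw [ht.card]; omega
  refine ⟨t₁, t₂, ⟨ht.left.fullCycleType_eq, ht.right.fullCycleType_eq, ht.cycle.isCycle hS, ?_⟩,
    ht.exists_closure_apply_eq⟩
  rw [ht.cycle.support_eq hS, ht.card]

theorem Realizable.exists_isCyclePair_add {a b e : Multiset ℕ} {m : ℕ}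
    (h : Realizable (Fin d) a b m) (he : ∀ x ∈ e, 0 < x) (hsum : a.sum + e.sum = d) (hm : 0 < m) :
    ∃ t₁ t₂ : Perm (Fin d), IsCyclePair t₁ t₂ (a + e) (b + e) m := by
  obtain ⟨U, -, hU⟩ := Finset.exists_subset_card_eq (s := (Finset.univ : Finset (Fin d)))
    (show a.sum ≤ _ by rw [Finset.card_fin]; omega)
  obtain ⟨t₁, t₂, S, ht⟩ := h U hU
  obtain ⟨f, hf⟩ := HasCycles.exists_of_card_eq e he Uᶜ
    (by rw [Finset.card_compl, Fintype.card_fin, hU]; omega)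
  have hf' : HasCycles .univ f Uᶜ e := hf.mono (Finset.subset_univ _)
  have hcomm : Commute f⁻¹ t₂ := commute_of_support_subset hf.inv.support_subset
    ht.right.support_subset disjoint_compl_left
  have hprod : t₁ * f * (t₂ * f⁻¹) = t₁ * t₂ := by
    rw [← hcomm.eq]
    group
  have hS : 1 < S.card := by rw [ht.card]; omega
  refine ⟨t₁ * f, t₂ * f⁻¹, ?_, ?_, hprod ▸ ht.cycle.isCycle hS, ?_⟩
  · exact HasCycles.fullCycleType_eq (U.union_compl ▸
      (ht.left.mono S.subset_univ).mul_of_disjoint hf' disjoint_compl_right)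
  · exact HasCycles.fullCycleType_eq (U.union_compl ▸
      (ht.right.mono S.subset_univ).mul_of_disjoint hf'.inv disjoint_compl_right)
  · rw [hprod, ht.cycle.support_eq hS, ht.card]

theorem exists_isCyclePair_of_lt_card {a : Multiset ℕ} {m : ℕ} (ha : ∀ x ∈ a, 0 < x)
    (hsum : a.sum = d) (hm : 0 < m) (hlt : m < a.card) :
    ∃ r, (∀ x ∈ r, 0 < x) ∧ r.sum = d ∧ r.card + m = a.card ∧
      ∃ t₁ t₂ : Perm (Fin d), IsCyclePair t₁ t₂ a r m := by
  obtain ⟨a₁, hmem⟩ := Multiset.card_pos_iff_exists_mem.1 <|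
    (Nat.choose_pos (show m + 1 ≤ a.card from hlt)).trans_eq (Multiset.card_powersetCard _ a).symm
  obtain ⟨hle, hcard⟩ := Multiset.mem_powersetCard.1 hmem
  obtain ⟨a₂, rfl⟩ := Multiset.le_iff_exists_add.1 hle
  obtain ⟨x, a₁, rfl, rfl⟩ := Multiset.card_eq_succ_iff.1 hcard
  simp only [Multiset.mem_add, or_imp, forall_and, Multiset.forall_mem_cons] at ha
  rw [Multiset.sum_add] at hsum
  obtain ⟨⟨hx, ha₁⟩, ha₂⟩ := ha
  refine ⟨{x + a₁.sum} + a₂, ?_, ?_, ?_,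
    (Realizable.star a₁ hx ha₁).exists_isCyclePair_add ha₂ hsum hm⟩
  · rw [Multiset.singleton_add, Multiset.forall_mem_cons]
    exact ⟨by omega, ha₂⟩
  · rw [← hsum, Multiset.sum_add, Multiset.sum_singleton, Multiset.sum_cons]
  · rw [Multiset.card_add, Multiset.card_add, Multiset.card_singleton, Multiset.card_cons]
    omega

/-- In `S_d`, permutations of cycle types `a` and `b` and cycles of lengths `m₁ + 1` and `m₂ + 1`,
in this order, have product `1` and generate a transitive group. Such data describe the monodromy
of a connected branched cover of the sphere of degree `d`. -/
def HasTransitiveFactorization (d : ℕ) (a b : Multiset ℕ) (m₁ m₂ : ℕ) : Prop :=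
  ∃ (τ₁ τ₂ σ₁ σ₂ : Equiv.Perm (Fin d)),
    τ₁ * τ₂ * σ₁ * σ₂ = 1 ∧
    fullCycleType τ₁ = a ∧
    fullCycleType τ₂ = b ∧
    σ₁.IsCycle ∧ σ₁.support.card = m₁ + 1 ∧
    σ₂.IsCycle ∧ σ₂.support.card = m₂ + 1 ∧
    (∀ x y : Fin d,
      ∃ π ∈ Subgroup.closure ({τ₁, τ₂, σ₁, σ₂} : Set (Equiv.Perm (Fin d))), π x = y)

namespace HasTransitiveFactorization

variable {a b r : Multiset ℕ} {m₁ m₂ g : ℕ}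

theorem symm (h : HasTransitiveFactorization d a b m₁ m₂) :
    HasTransitiveFactorization d b a m₂ m₁ := by
  obtain ⟨τ₁, τ₂, σ₁, σ₂, hprod, hτ₁, hτ₂, hσ₁, hm₁, hσ₂, hm₂, htrans⟩ := h
  refine ⟨τ₂⁻¹, τ₁⁻¹, σ₂⁻¹, σ₁⁻¹, ?_, by rwa [fullCycleType_inv], by rwa [fullCycleType_inv],
    hσ₂.inv, by rwa [Perm.support_inv], hσ₁.inv, by rwa [Perm.support_inv], fun x y => ?_⟩
  · rw [mul_assoc] at hprod
    rw [mul_assoc, ← mul_inv_rev, ← mul_inv_rev, ← mul_inv_rev, inv_eq_one]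
    exact mul_eq_one_comm.1 hprod
  · refine (htrans x y).imp fun π hπ => ⟨(Subgroup.closure_le _).2 ?_ hπ.1, hπ.2⟩
    rintro f (rfl | rfl | rfl | rfl) <;>
      exact inv_mem_iff.1 (Subgroup.subset_closure (by simp))

theorem of_isCyclePair {t₁ t₂ s₁ s₂ : Perm (Fin d)} (ht : IsCyclePair t₁ t₂ a r m₁)
    (htrans : ∀ x y : Fin d, ∃ π ∈ Subgroup.closure {t₁, t₂}, π x = y)
    (hs : IsCyclePair s₁ s₂ b r m₂) : HasTransitiveFactorization d a b m₁ m₂ := by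
  obtain ⟨k, hk⟩ := isConj_iff.1 <| fullCycleType_eq_iff_isConj.1 <|
    hs.right.trans (ht.right.symm.trans (fullCycleType_inv t₂).symm)
  set c := k * (s₁ * s₂) * k⁻¹ with hc_def
  have hc : t₂ * c = t₂ * (k * s₁ * k⁻¹) * t₂⁻¹ := by rw [← hk, hc_def]; group
  have hc_card : c.support.card = m₂ + 1 := by rw [Perm.card_support_conj, hs.card_support]
  refine ⟨t₁, t₂ * c, (t₁ * t₂)⁻¹, t₁ * t₂ * c⁻¹ * (t₁ * t₂)⁻¹, by group, ht.left, ?_,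
    ht.isCycle.inv, by rw [Perm.support_inv, ht.card_support], hs.isCycle.conj.inv.conj,
    by rw [Perm.card_support_conj, Perm.support_inv, hc_card], fun x y => ?_⟩
  · rw [hc, fullCycleType_conj, fullCycleType_conj, hs.left]
  · refine (htrans x y).imp fun π hπ => ⟨(Subgroup.closure_le _).2 ?_ hπ.1, hπ.2⟩
    set G := Subgroup.closure {t₁, t₂ * c, (t₁ * t₂)⁻¹, t₁ * t₂ * c⁻¹ * (t₁ * t₂)⁻¹}
    have ht₁ : t₁ ∈ G := Subgroup.subset_closure (by simp)
    have ht₁₂ : t₁ * t₂ ∈ G := inv_mem_iff.1 (Subgroup.subset_closure (by simp))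
    rintro f (rfl | rfl)
    exacts [ht₁, (mul_mem_cancel_left ht₁).1 ht₁₂]

theorem of_lt_card (hg : 0 < g) (ha : ∀ x ∈ a, 0 < x) (hb : ∀ x ∈ b, 0 < x) (hsa : a.sum = d)
    (hsb : b.sum = d) (hm₁ : 0 < m₁) (hm₂ : 0 < m₂)
    (hcard : m₁ + m₂ + 2 = a.card + b.card + 2 * g) (hm₂d : m₂ < d) (hlt : m₁ < a.card) :
    HasTransitiveFactorization d a b m₁ m₂ := by
  obtain ⟨r, hr, hsr, hcr, t₁, t₂, ht⟩ := exists_isCyclePair_of_lt_card ha hsa hm₁ hlt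
  have h : Admissible b r m₂ g :=
    ⟨hb, hr, hsb.trans hsr.symm, hsb ▸ hm₂d, by omega, .inl hg⟩
  obtain ⟨s₁, s₂, hs, htrans⟩ := (Realizable.of_admissible h).exists_isCyclePair hsb hm₂
  exact (of_isCyclePair hs htrans ht).symm

theorem of_realizable (ha : Realizable (Fin d) a r m₁) (hb : Realizable (Fin d) b r m₂)
    (hsa : a.sum = d) (hsb : b.sum = d) (hm₁ : 0 < m₁) (hm₂ : 0 < m₂) :
    HasTransitiveFactorization d a b m₁ m₂ := by
  obtain ⟨t₁, t₂, ht, htrans⟩ := ha.exists_isCyclePair hsa hm₁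
  obtain ⟨s₁, s₂, hs, -⟩ := hb.exists_isCyclePair hsb hm₂
  exact of_isCyclePair ht htrans hs

theorem of_card_add_card (hg : 0 < g) (ha : ∀ x ∈ a, 0 < x) (hb : ∀ x ∈ b, 0 < x)
    (hsa : a.sum = d) (hsb : b.sum = d) (hm₁ : 0 < m₁) (hm₂ : 0 < m₂)
    (hcard : m₁ + m₂ + 2 = a.card + b.card + 2 * g) (hm₁d : m₁ < d) (hm₂d : m₂ < d) :
    HasTransitiveFactorization d a b m₁ m₂ := by
  obtain hlt | hle₁ := lt_or_ge m₁ a.card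
  · exact of_lt_card hg ha hb hsa hsb hm₁ hm₂ hcard hm₂d hlt
  obtain hlt | hle₂ := lt_or_ge m₂ b.card
  · exact (of_lt_card hg hb ha hsb hsa hm₂ hm₁ (by omega) hm₁d hlt).symm
  rw [← hsa] at hm₁d
  rw [← hsb] at hm₂d
  obtain ⟨h, hh | hh⟩ := (m₁ - a.card).even_or_odd'
  · obtain ⟨n, rfl⟩ := Nat.exists_eq_add_of_le (show 1 ≤ d by omega)
    exact of_realizable (.to_pair (h := h) ha hsa (by omega) hm₁d)
      (.to_pair (h := g - 1 - h) hb hsb (by omega) hm₂d) hsa hsb hm₁ hm₂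
  · have hra := Realizable.to_single (α := Fin d) (h := h + 1) ha (by omega) hm₁d
    have hrb := Realizable.to_single (α := Fin d) (h := g - 1 - h) hb (by omega) hm₂d
    rw [hsa] at hra
    rw [hsb] at hrb
    exact of_realizable hra hrb hsa hsb hm₁ hm₂

end HasTransitiveFactorization

end

/-- Lemma 2.5 (case `ℓ = 2` of Proposition 1.4): for positive integers
`d, g`, partitions `(a₁,…,a_p)`, `(b₁,…,b_q)` of `d` and positive integers
`m₁, m₂` with `m₁ + m₂ = p + q - 2 + 2g`, `m₁ + 1 ≤ d` and `m₂ + 1 ≤ d`,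
there exist permutations `τ₁, τ₂, σ₁, σ₂ ∈ S_d` with `τ₁ τ₂ σ₁ σ₂ = id`,
prescribed cycle types, `σᵢ` an `(mᵢ+1)`-cycle, generating a transitive
subgroup. -/
theorem lem_2_5 (d g p q m₁ m₂ : ℕ) (hd : 0 < d) (hg : 0 < g)
    (hp : 0 < p) (hq : 0 < q) (hm₁ : 0 < m₁) (hm₂ : 0 < m₂)
    (a : Fin p → ℕ) (b : Fin q → ℕ)
    (ha : ∀ i, 0 < a i) (hb : ∀ i, 0 < b i)
    (hsa : ∑ i, a i = d) (hsb : ∑ i, b i = d)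
    (hsm : m₁ + m₂ = p + q - 2 + 2 * g)
    (hm₁d : m₁ + 1 ≤ d) (hm₂d : m₂ + 1 ≤ d) :
    ∃ (τ₁ τ₂ σ₁ σ₂ : Equiv.Perm (Fin d)),
      τ₁ * τ₂ * σ₁ * σ₂ = 1 ∧
      fullCycleType τ₁ = Finset.univ.val.map a ∧
      fullCycleType τ₂ = Finset.univ.val.map b ∧
      σ₁.IsCycle ∧ σ₁.support.card = m₁ + 1 ∧
      σ₂.IsCycle ∧ σ₂.support.card = m₂ + 1 ∧
      (∀ x y : Fin d,
        ∃ π ∈ Subgroup.closure ({τ₁, τ₂, σ₁, σ₂} : Set (Equiv.Perm (Fin d))),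
          π x = y) := by
  exact HasTransitiveFactorization.of_card_add_card hg (by simpa using ha) (by simpa using hb) hsa
    hsb hm₁ hm₂ (by simp; omega) hm₁d hm₂d
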